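/- arXiv:2104.12415 — 4 statements merged into one kernel-verified Lean document; each statement's English description precedes it below -/
import Mathlib

section
/- Let (A,S,Z,Φ) be a structured C*-algebra. Then Z is binormal if and only if Z¹₊ (the set of positive elements of Z of norm at most 1) is binormal. -/
variable {A : Type*} [CStarAlgebra A] [PartialOrder A] [StarOrderedRing A]

/-- A structured C*-algebra `(A, S, Z, Φ)`. -/
structure StructuredCStar (A : Type*) [CStarAlgebra A] [PartialOrder A]
    [StarOrderedRing A] where
  /-- The expectation. -/
  Φ : A →ₗ[ℂ] A
  /-- The distinguished closed *-subsemigroup. -/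
  S : Set A
  /-- The distinguished central C*-subalgebra. -/
  Z : Set A
  Φ_idem : ∀ a : A, Φ (Φ a) = Φ a
  Φ_contractive : ∀ a : A, ‖Φ a‖ ≤ ‖a‖
  Φ_pos : ∀ a : A, 0 ≤ a → 0 ≤ Φ a
  Φ_mul_left : ∀ a b : A, Φ (Φ a * b) = Φ a * Φ b
  Φ_mul_right : ∀ a b : A, Φ (a * Φ b) = Φ a * Φ b
  S_isClosed : IsClosed S
  S_mul : ∀ a ∈ S, ∀ b ∈ S, a * b ∈ S
  S_star : ∀ a ∈ S, star a ∈ S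
  S_smul : ∀ (c : ℂ), ∀ a ∈ S, c • a ∈ S
  Z_sub_S : Z ⊆ S
  Z_isClosed : IsClosed Z
  Z_add : ∀ a ∈ Z, ∀ b ∈ Z, a + b ∈ Z
  Z_mul : ∀ a ∈ Z, ∀ b ∈ Z, a * b ∈ Z
  Z_star : ∀ a ∈ Z, star a ∈ Z
  Z_smul : ∀ (c : ℂ), ∀ a ∈ Z, c • a ∈ Z
  Z_fixed : ∀ z ∈ Z, Φ z = z
  Z_central : ∀ z ∈ Z, ∀ a : A, z * Φ a = Φ a * z
  PhiS_add : ∀ x ∈ Φ '' S, ∀ y ∈ Φ '' S, x + y ∈ Φ '' S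
  PhiS_ideal_right : ∀ x ∈ Φ '' S, ∀ a : A, x * Φ a ∈ Φ '' S
  PhiS_ideal_left : ∀ x ∈ Φ '' S, ∀ a : A, Φ a * x ∈ Φ '' S
  S_sq_sub_PhiS : ∀ s ∈ S, star s * s ∈ Φ '' S
  PhiS_sub_S : ∀ s ∈ S, Φ s ∈ S

namespace StructuredCStar

variable (𝒜 : StructuredCStar A)

/-- `a <_s b` : domination witnessed by `s`. -/
def domBy (a s b : A) : Prop :=
  a = a * s * b ∧ a = b * s * a ∧
  a * s ∈ 𝒜.Φ '' 𝒜.S ∧ s * a ∈ 𝒜.Φ '' 𝒜.S ∧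
  b * s ∈ 𝒜.Z ∧ s * b ∈ 𝒜.Z

/-- `a < b` : domination. -/
def dom (a b : A) : Prop := ∃ s ∈ 𝒜.S, 𝒜.domBy a s b

/-- `N ⊆ S` is binormal. -/
def Binormal (N : Set A) : Prop :=
  ∀ a ∈ 𝒜.S, ∀ b ∈ 𝒜.S, a * b ∈ N → ∀ z ∈ N, a * z * b ∈ N

/-- `B ⊆ S` is bistable. -/
def Bistable (B : Set A) : Prop :=
  ∀ a ∈ 𝒜.S, ∀ b ∈ 𝒜.S, a * b ∈ B → 𝒜.Φ a * b ∈ B ∧ a * 𝒜.Φ b ∈ B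

/-- `P ⊆ S` is productive. -/
def Productive (P : Set A) : Prop :=
  ∀ a ∈ 𝒜.S, 𝒜.Φ a ∈ closure ((a * ·) '' P) ∧ 𝒜.Φ a ∈ closure ((· * a) '' P)

end StructuredCStar


/-! Write `x = a z b` and `w = a b`. Since `z` commutes with `a⋆ a` and `b b⋆`, one has
`x⋆ x = w⋆ v` with `v = a z⋆ z b`, whence `‖x - x e‖² ≤ ‖w - w e‖ ‖v - v e‖` for every self-adjoint
`e`. Choosing `e = h k` with `h = w⋆ w` and a suitable `k ≥ 0` in the C⋆-algebra generated by `h`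
makes the right-hand side arbitrarily small, so `x` is a limit of elements of the form `x h k`.

If `Z` is binormal, `w ≥ 0` and `z ≥ 0`, then `x w⋆ = a z (b b⋆) a⋆ ≥ 0`, hence
`x h k = (x w⋆) (w k) ≥ 0` by commutativity of `Z`, and `x ≥ 0` in the limit. Moreover
`‖x‖ ≤ ‖z‖ ‖w‖` because `z` commutes with `|b⋆|`.

If `Z¹₊` is binormal, then applying binormality to `a` and a small positive multiple of `b w⋆`,
whose product is a multiple of `w w⋆ ≥ 0`, gives `x w⋆ ∈ Z`, first for `z ∈ Z¹₊` and then for all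
`z ∈ Z` by linearity. Hence `x h k = (x w⋆) (w k) ∈ Z`, and `x ∈ Z` in the limit.
-/

/-- Binormality of `N` relative to a subset `S` of a multiplicative structure, used to state
`StructuredCStar.Binormal` for a bare pair of sets, with no expectation around. -/
def IsBinormalIn {M : Type*} [Mul M] (S N : Set M) : Prop :=
  ∀ a ∈ S, ∀ b ∈ S, a * b ∈ N → ∀ z ∈ N, a * z * b ∈ N

theorem star_mul_mul_mul_of_commute {M : Type*} [Semigroup M] [StarMul M] {a z : M} (b : M)
    (hza : Commute (star z) (star a * a)) :
    star (a * z * b) * (a * z * b) = star (a * b) * (a * (star z * z) * b) := by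
  calc star (a * z * b) * (a * z * b) = star b * (star z * (star a * a)) * z * b := by
        simp only [star_mul, mul_assoc]
    _ = star (a * b) * (a * (star z * z) * b) := by
        rw [hza.eq]; simp only [star_mul, mul_assoc]

theorem norm_sub_mul_sq_le {B : Type*} [NonUnitalNormedRing B] [StarRing B] [CStarRing B]
    {x w v e : B} (hx : star x * x = star w * v) (he : IsSelfAdjoint e) :
    ‖x - x * e‖ ^ 2 ≤ ‖w - w * e‖ * ‖v - v * e‖ := by
  have hxe : star (x - x * e) * (x - x * e) = star (w - w * e) * (v - v * e) := by
    calc star (x - x * e) * (x - x * e)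
        = star x * x - star x * x * e - e * (star x * x) + e * (star x * x) * e := by
          rw [star_sub, star_mul, he.star_eq]; noncomm_ring
      _ = star (w - w * e) * (v - v * e) := by
          rw [hx, star_sub, star_mul, he.star_eq]; noncomm_ring
  rw [sq, ← CStarRing.norm_star_mul_self, hxe, ← norm_star (w - w * e)]
  exact norm_mul_le _ _

theorem mul_one_sub_sq_div_sq_le {t c : ℝ} (ht : 0 ≤ t) (hc : 0 < c) :
    t * (1 - t * (t / (t ^ 2 + c ^ 2))) ^ 2 ≤ c := by
  have hpos : 0 < t ^ 2 + c ^ 2 := by positivity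
  have hq : 1 - t * (t / (t ^ 2 + c ^ 2)) = c ^ 2 / (t ^ 2 + c ^ 2) := by field_simp; ring
  have hq₁ : c ^ 2 / (t ^ 2 + c ^ 2) ≤ 1 := by rw [div_le_one hpos]; nlinarith
  calc t * (1 - t * (t / (t ^ 2 + c ^ 2))) ^ 2
      = t * (c ^ 2 / (t ^ 2 + c ^ 2)) * (c ^ 2 / (t ^ 2 + c ^ 2)) := by rw [hq]; ring
    _ ≤ t * (c ^ 2 / (t ^ 2 + c ^ 2)) * 1 := by gcongr
    _ ≤ c := by
      rw [mul_one, mul_div_assoc', div_le_iff₀ hpos]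
      nlinarith [mul_nonneg ht hc.le, sq_nonneg (t - c)]

section NonUnitalCStarAlgebra

variable {B : Type*} [NonUnitalCStarAlgebra B] [PartialOrder B] [StarOrderedRing B]

open NonUnitalStarAlgebra

theorem norm_sub_mul_cfcₙ_sq_le {w : B} {f : ℝ → ℝ} (hf : Continuous f) (hf₀ : f 0 = 0) {c : ℝ}
    (hc : ∀ t, 0 ≤ t → t * (1 - f t) ^ 2 ≤ c) :
    ‖w - w * cfcₙ f (star w * w)‖ ^ 2 ≤ c := by
  set h := star w * w with hh
  have hsa : IsSelfAdjoint h := .star_mul_self w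
  have hsquare : star (w - w * cfcₙ f h) * (w - w * cfcₙ f h)
      = cfcₙ (fun t ↦ t * (1 - f t) ^ 2) h := by
    calc star (w - w * cfcₙ f h) * (w - w * cfcₙ f h)
        = h - cfcₙ f h * h - (h * cfcₙ f h - cfcₙ f h * h * cfcₙ f h) := by
          rw [star_sub, star_mul, (cfcₙ_predicate f h : IsSelfAdjoint _).star_eq, hh]
          noncomm_ring
      _ = cfcₙ (fun t ↦ t - f t * t - (t * f t - f t * t * f t)) h := by
          rw [cfcₙ_sub (fun t ↦ t - f t * t) (fun t ↦ t * f t - f t * t * f t) h,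
            cfcₙ_sub (fun t ↦ t) (fun t ↦ f t * t) h,
            cfcₙ_sub (fun t ↦ t * f t) (fun t ↦ f t * t * f t) h,
            cfcₙ_mul (fun t ↦ f t * t) f h, cfcₙ_mul f (fun t ↦ t) h,
            cfcₙ_mul (fun t ↦ t) f h, cfcₙ_id' ℝ h]
      _ = cfcₙ (fun t ↦ t * (1 - f t) ^ 2) h := by congr 1; ext t; ring
  rw [sq, ← CStarRing.norm_star_mul_self, hsquare]
  refine norm_cfcₙ_le fun t ht ↦ ?_
  have ht₀ : 0 ≤ t := quasispectrum_nonneg_of_nonneg h (star_mul_self_nonneg w) t ht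
  rw [Real.norm_of_nonneg (by positivity)]
  exact hc t ht₀

theorem exists_mem_elemental_norm_sub_mul_le (w : B) {ε : ℝ} (hε : 0 < ε) :
    ∃ k ∈ elemental ℂ (star w * w), 0 ≤ k ∧ IsSelfAdjoint (star w * w * k) ∧
      ‖star w * w * k‖ ≤ 1 ∧ ‖w - w * (star w * w * k)‖ ≤ ε := by
  set h := star w * w
  have hsa : IsSelfAdjoint h := .star_mul_self w
  have h₀ : ∀ t ∈ quasispectrum ℝ h, 0 ≤ t :=
    quasispectrum_nonneg_of_nonneg h (star_mul_self_nonneg w)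
  -- Off a neighbourhood of `0`, `g` is close to `t⁻¹`; unlike `(t + c)⁻¹` it vanishes at `0`, so
  -- that no unit is needed to apply it.
  let g : ℝ → ℝ := fun t ↦ t / (t ^ 2 + (ε ^ 2) ^ 2)
  have hden (t : ℝ) : 0 < t ^ 2 + (ε ^ 2) ^ 2 := by positivity
  have hg : Continuous g := by fun_prop (disch := exact fun t ↦ (hden t).ne')
  have : g 0 = 0 := zero_div _
  have hmul : h * cfcₙ g h = cfcₙ (fun t ↦ t * g t) h := by
    rw [cfcₙ_mul (fun t ↦ t) g h, cfcₙ_id' ℝ h]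
  have : IsClosed (elemental ℂ h : Set B) := elemental.isClosed ℂ h
  refine ⟨cfcₙ g h, cfcₙ_mem g (elemental.self_mem ℂ h),
    cfcₙ_nonneg fun t ht ↦ div_nonneg (h₀ t ht) (hden t).le, ?_⟩
  rw [hmul]
  refine ⟨cfcₙ_predicate _ h, norm_cfcₙ_le fun t _ ↦ ?_, ?_⟩
  · have htg : t * g t = t ^ 2 / (t ^ 2 + (ε ^ 2) ^ 2) := by simp only [g]; ring
    rw [htg, Real.norm_of_nonneg (by positivity), div_le_one (hden t)]
    linarith [sq_nonneg (ε ^ 2)]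
  · exact le_of_sq_le_sq (norm_sub_mul_cfcₙ_sq_le (by fun_prop) (by simp) fun t ht ↦
      mul_one_sub_sq_div_sq_le ht (by positivity)) hε.le

theorem mem_closure_mul_star_mul_self_mul {x w v : B} (hx : star x * x = star w * v) :
    x ∈ closure ((fun k ↦ x * (star w * w * k)) ''
      {k | k ∈ elemental ℂ (star w * w) ∧ 0 ≤ k}) := by
  refine Metric.mem_closure_iff.mpr fun ε hε ↦ ?_
  obtain ⟨k, hk, hk₀, hsa, hnorm, hw⟩ :=
    exists_mem_elemental_norm_sub_mul_le w (ε := ε ^ 2 / (2 * ‖v‖ + 1)) (by positivity)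
  refine ⟨_, ⟨k, ⟨hk, hk₀⟩, rfl⟩, ?_⟩
  set e := star w * w * k
  have hv : ‖v - v * e‖ ≤ 2 * ‖v‖ := by
    calc ‖v - v * e‖ ≤ ‖v‖ + ‖v * e‖ := norm_sub_le _ _
      _ ≤ ‖v‖ + ‖v‖ * ‖e‖ := by gcongr; exact norm_mul_le _ _
      _ ≤ ‖v‖ + ‖v‖ * 1 := by gcongr
      _ = 2 * ‖v‖ := by ring
  have hsq : ‖x - x * e‖ ^ 2 < ε ^ 2 := by
    calc ‖x - x * e‖ ^ 2 ≤ ‖w - w * e‖ * ‖v - v * e‖ := norm_sub_mul_sq_le hx hsa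
      _ ≤ ε ^ 2 / (2 * ‖v‖ + 1) * (2 * ‖v‖) := by gcongr
      _ < ε ^ 2 / (2 * ‖v‖ + 1) * (2 * ‖v‖ + 1) := by gcongr; linarith
      _ = ε ^ 2 := by field_simp
  rw [dist_eq_norm]
  exact lt_of_pow_lt_pow_left₀ 2 hε.le hsq

theorem norm_mul_abs_star (c b : B) : ‖c * CFC.abs (star b)‖ = ‖c * b‖ := by
  have hstar : c * CFC.abs (star b) * star (c * CFC.abs (star b)) = c * b * star (c * b) := by
    calc c * CFC.abs (star b) * star (c * CFC.abs (star b))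
        = c * (CFC.abs (star b) * CFC.abs (star b)) * star c := by
          rw [star_mul, (CFC.abs_nonneg (star b)).star_eq]; simp only [mul_assoc]
      _ = c * b * star (c * b) := by
          rw [CFC.abs_mul_abs, star_star, star_mul]; simp only [mul_assoc]
  rw [← sq_eq_sq₀ (norm_nonneg _) (norm_nonneg _), sq, sq, ← CStarRing.norm_self_mul_star, hstar,
    CStarRing.norm_self_mul_star]

theorem norm_mul_mul_le_of_commute (a : B) {b z : B} (hzb : Commute z (b * star b)) :
    ‖a * z * b‖ ≤ ‖a * b‖ * ‖z‖ := by
  have hz : Commute z (CFC.abs (star b)) := by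
    refine (Commute.cfcₙ_nnreal ?_ _).symm
    simpa only [star_star] using hzb.symm
  calc ‖a * z * b‖ = ‖a * CFC.abs (star b) * z‖ := by
        rw [← norm_mul_abs_star, mul_assoc, hz.eq, ← mul_assoc]
    _ ≤ ‖a * CFC.abs (star b)‖ * ‖z‖ := norm_mul_le _ _
    _ = ‖a * b‖ * ‖z‖ := by rw [norm_mul_abs_star]

theorem mul_mul_mul_star_nonneg (a : B) {b z : B} (hz : 0 ≤ z) (hzb : Commute z (b * star b)) :
    0 ≤ a * z * b * star (a * b) := by
  have h : 0 ≤ a * (z * (b * star b)) * star a :=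
    star_right_conjugate_nonneg (hzb.mul_nonneg hz (mul_star_self_nonneg b)) a
  simpa only [star_mul, mul_assoc] using h

variable {Z : NonUnitalStarSubalgebra ℂ B} [IsClosed (Z : Set B)]

theorem mul_mul_nonneg_of_mem (hZ : ∀ y ∈ Z, ∀ z ∈ Z, Commute y z) {a b z : B}
    (hza : Commute z (star a * a)) (hzb : Commute z (b * star b)) (hz₀ : 0 ≤ z)
    (hab : a * b ∈ Z) (hab₀ : 0 ≤ a * b) (hazb : a * z * b ∈ Z) : 0 ≤ a * z * b := by
  rw [← hz₀.star_eq] at hza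
  have hx := mem_closure_mul_star_mul_self_mul (star_mul_mul_mul_of_commute b hza)
  refine closure_minimal ?_ CStarAlgebra.isClosed_nonneg hx
  rintro _ ⟨k, ⟨hk, hk₀⟩, rfl⟩
  have hkZ : k ∈ Z :=
    elemental.le_of_mem ‹_› (mul_mem (star_mem hab) hab) hk
  have h := Commute.mul_nonneg (mul_mul_mul_star_nonneg a hz₀ hzb)
    ((hZ _ hab _ hkZ).mul_nonneg hab₀ hk₀)
    (hZ _ (mul_mem hazb (star_mem hab)) _ (mul_mem hab hkZ))
  simpa only [Set.mem_ofPred_eq, mul_assoc] using h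

theorem mem_span_nonneg_unitClosedBall {z : B} (hz : z ∈ Z) :
    z ∈ Submodule.span ℂ {y | y ∈ Z ∧ 0 ≤ y ∧ ‖y‖ ≤ 1} := by
  let _ := CStarAlgebra.spectralOrder Z
  have := CStarAlgebra.spectralOrderedRing Z
  have hspan := Submodule.eq_top_iff'.mp
    (CStarAlgebra.span_nonneg_inter_unitClosedBall (A := Z)) ⟨z, hz⟩
  have hmap := Submodule.mem_map_of_mem (f := Z.toSubmodule.subtype) hspan
  rw [Submodule.map_span] at hmap
  refine Submodule.span_mono ?_ hmap
  rintro _ ⟨y, ⟨hy₀, hy₁⟩, rfl⟩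
  obtain ⟨u, rfl⟩ := (CStarAlgebra.nonneg_iff_eq_star_mul_self (A := Z)).mp hy₀
  exact ⟨(star u * u).2, star_mul_self_nonneg (u : B), by simpa using hy₁⟩

theorem exists_pos_norm_smul_le_one {E : Type*} [SeminormedAddCommGroup E] [NormedSpace ℝ E]
    (x : E) : ∃ r : ℝ, 0 < r ∧ ‖r • x‖ ≤ 1 := by
  have hx : 0 < 1 + ‖x‖ := by positivity
  refine ⟨(1 + ‖x‖)⁻¹, by positivity, ?_⟩
  rw [norm_smul, Real.norm_of_nonneg (by positivity), inv_mul_le_one₀ hx]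
  linarith

variable {S : Set B}

theorem IsBinormalIn.mul_mul_mul_star_mem (hN : IsBinormalIn S {z | z ∈ Z ∧ 0 ≤ z ∧ ‖z‖ ≤ 1})
    (hSZ : ∀ s ∈ S, ∀ z ∈ Z, s * z ∈ S) {a b z : B} (ha : a ∈ S) (hb : b ∈ S)
    (hab : a * b ∈ Z) (hz : z ∈ Z) : a * z * b * star (a * b) ∈ Z := by
  set w := a * b with hw
  obtain ⟨r, hr, hr₁⟩ := exists_pos_norm_smul_le_one (w * star w)
  have hrw : r • star w ∈ Z := SMulMemClass.smul_mem (r : ℂ) (star_mem hab)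
  have hmul : a * (b * r • star w) = r • (w * star w) := by
    rw [← mul_assoc, mul_smul_comm, hw]
  have hprod : a * (b * r • star w) ∈ {z | z ∈ Z ∧ 0 ≤ z ∧ ‖z‖ ≤ 1} := by
    refine ⟨?_, ?_, hmul ▸ hr₁⟩
    · rw [← mul_assoc]
      exact mul_mem hab hrw
    · rw [hmul]
      exact smul_nonneg hr.le (mul_star_self_nonneg w)
  have hspan : Submodule.span ℂ {z | z ∈ Z ∧ 0 ≤ z ∧ ‖z‖ ≤ 1} ≤ Z.toSubmodule.comap
      (LinearMap.mulRight ℂ (b * r • star w) ∘ₗ LinearMap.mulLeft ℂ a) :=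
    Submodule.span_le.mpr fun y hy ↦ (hN a ha _ (hSZ b hb _ hrw) hprod y hy).1
  have hmem : a * z * (b * r • star w) ∈ Z := hspan (mem_span_nonneg_unitClosedBall hz)
  have hinv : r⁻¹ • (a * z * (b * r • star w)) ∈ Z :=
    SMulMemClass.smul_mem ((r⁻¹ : ℝ) : ℂ) hmem
  rwa [← mul_assoc, mul_smul_comm, inv_smul_smul₀ hr.ne'] at hinv

theorem IsBinormalIn.pos_unitBall (hB : IsBinormalIn S (Z : Set B))
    (hZ : ∀ y ∈ Z, ∀ z ∈ Z, Commute y z)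
    (hleft : ∀ s ∈ S, ∀ z ∈ Z, Commute z (star s * s))
    (hright : ∀ s ∈ S, ∀ z ∈ Z, Commute z (s * star s)) :
    IsBinormalIn S {z | z ∈ Z ∧ 0 ≤ z ∧ ‖z‖ ≤ 1} := by
  rintro a ha b hb ⟨hab, hab₀, hab₁⟩ z ⟨hz, hz₀, hz₁⟩
  have hazb : a * z * b ∈ Z := hB a ha b hb hab z hz
  exact ⟨hazb, mul_mul_nonneg_of_mem hZ (hleft a ha z hz) (hright b hb z hz) hz₀ hab hab₀ hazb,
    (norm_mul_mul_le_of_commute a (hright b hb z hz)).trans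
      (mul_le_one₀ hab₁ (norm_nonneg z) hz₁)⟩

theorem IsBinormalIn.of_pos_unitBall (hN : IsBinormalIn S {z | z ∈ Z ∧ 0 ≤ z ∧ ‖z‖ ≤ 1})
    (hSZ : ∀ s ∈ S, ∀ z ∈ Z, s * z ∈ S)
    (hleft : ∀ s ∈ S, ∀ z ∈ Z, Commute z (star s * s)) :
    IsBinormalIn S (Z : Set B) := by
  intro a ha b hb hab z hz
  have hx := mem_closure_mul_star_mul_self_mul
    (star_mul_mul_mul_of_commute b (hleft a ha _ (star_mem hz)))
  refine closure_minimal ?_ ‹IsClosed (Z : Set B)› hx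
  rintro _ ⟨k, ⟨hk, -⟩, rfl⟩
  have hkZ : k ∈ Z := elemental.le_of_mem ‹_› (mul_mem (star_mem hab) hab) hk
  have h := mul_mem (hN.mul_mul_mul_star_mem hSZ ha hb hab hz) (mul_mem hab hkZ)
  simpa only [SetLike.mem_coe, mul_assoc] using h

theorem StructuredCStar.binormal_iff_binormal_pos_unitBall_general
    (hSZ : ∀ s ∈ S, ∀ z ∈ Z, s * z ∈ S) (hZ : ∀ y ∈ Z, ∀ z ∈ Z, Commute y z)
    (hleft : ∀ s ∈ S, ∀ z ∈ Z, Commute z (star s * s))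
    (hright : ∀ s ∈ S, ∀ z ∈ Z, Commute z (s * star s)) :
    IsBinormalIn S (Z : Set B) ↔ IsBinormalIn S {z | z ∈ Z ∧ 0 ≤ z ∧ ‖z‖ ≤ 1} :=
  ⟨fun hB ↦ hB.pos_unitBall hZ hleft hright, fun hN ↦ hN.of_pos_unitBall hSZ hleft⟩

end NonUnitalCStarAlgebra

namespace StructuredCStar

variable (𝒜 : StructuredCStar A)

theorem mul_mem_of_mem_Z (s : A) (hs : s ∈ 𝒜.S) (z : A) (hz : z ∈ 𝒜.Z) : s * z ∈ 𝒜.S :=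
  𝒜.S_mul s hs z (𝒜.Z_sub_S hz)

theorem commute_of_mem_Z (y : A) (hy : y ∈ 𝒜.Z) (z : A) (hz : z ∈ 𝒜.Z) : Commute y z := by
  have h := 𝒜.Z_central y hy z
  rwa [𝒜.Z_fixed z hz] at h

theorem commute_star_mul_self (s : A) (hs : s ∈ 𝒜.S) (z : A) (hz : z ∈ 𝒜.Z) :
    Commute z (star s * s) := by
  obtain ⟨t, -, ht⟩ := 𝒜.S_sq_sub_PhiS s hs
  exact ht ▸ 𝒜.Z_central z hz t

theorem commute_mul_star_self (s : A) (hs : s ∈ 𝒜.S) (z : A) (hz : z ∈ 𝒜.Z) :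
    Commute z (s * star s) := by
  simpa only [star_star] using 𝒜.commute_star_mul_self (star s) (𝒜.S_star s hs) z hz

/-- The set `Z` as a ⋆-subalgebra, which makes the theory of C⋆-subalgebras applicable to it. The
axioms of `StructuredCStar` allow `Z = ∅`, which is not a subalgebra. -/
def centralSubalgebra (hne : 𝒜.Z.Nonempty) : NonUnitalStarSubalgebra ℂ A where
  carrier := 𝒜.Z
  add_mem' hx hy := 𝒜.Z_add _ hx _ hy
  mul_mem' hx hy := 𝒜.Z_mul _ hx _ hy
  zero_mem' := by
    obtain ⟨z, hz⟩ := hne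
    simpa only [zero_smul] using 𝒜.Z_smul 0 z hz
  smul_mem' c _ hx := 𝒜.Z_smul c _ hx
  star_mem' hx := 𝒜.Z_star _ hx

instance (hne : 𝒜.Z.Nonempty) : IsClosed (𝒜.centralSubalgebra hne : Set A) := 𝒜.Z_isClosed

end StructuredCStar

/-- `Z` is binormal iff `Z¹₊` is binormal. -/
theorem StructuredCStar.binormal_iff_binormal_pos_unitBall (𝒜 : StructuredCStar A) :
    𝒜.Binormal 𝒜.Z ↔ 𝒜.Binormal {z ∈ 𝒜.Z | 0 ≤ z ∧ ‖z‖ ≤ 1} := by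
  rcases 𝒜.Z.eq_empty_or_nonempty with hempty | hne
  · simp [Binormal, hempty]
  · exact binormal_iff_binormal_pos_unitBall_general (Z := 𝒜.centralSubalgebra hne)
      𝒜.mul_mem_of_mem_Z 𝒜.commute_of_mem_Z 𝒜.commute_star_mul_self 𝒜.commute_mul_star_self
end

section
/- Let (A,S,Z,Φ) be a structured C*-algebra. If Z₊ (the set of positive elements of Z) is bistable, then Z is bistable. Conversely, if Φ[S] is bistable and Z is bistable, then Z₊ is bistable. -/
variable {A : Type*} [CStarAlgebra A] [PartialOrder A] [StarOrderedRing A]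

/-!
Let `a * b ∈ Z` and put `w = Φ a * b` and `h = star (a * b) * (a * b)`. The Kadison–Schwarz
inequality gives `star (Φ a) * Φ a ≤ star a * a`, hence `star w * w ≤ h`, and this forces
`w * h * (ε + h)⁻¹ → w` as `ε → 0`. Thus `w` inherits from `w * h` both membership in `Z` and
positivity. If `Z₊` is bistable, then `w * star (a * b) ∈ Z`, because `a * (b * star (a * b))` lies
in `Z₊`; so `w * h ∈ Z`. If `w ∈ Z` and `0 ≤ a * b`, then applying `Φ` to
`w * star (a * b) = Φ a * (b * star b) * star a` shows that this element is `w * star w`; so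
`w * h = w * (a * b) * star w` is positive.
-/

open Filter Topology
open scoped Ring

section Resolvent

variable {w h : A} {ε : ℝ}

lemma isStrictlyPositive_algebraMap_add (hε : 0 < ε) (hh : 0 ≤ h) :
    IsStrictlyPositive (algebraMap ℝ A ε + h) :=
  (isStrictlyPositive_algebraMap hε).add_nonneg hh

lemma norm_ringInverse_algebraMap_add_le (hε : 0 < ε) (hh : 0 ≤ h) :
    ‖(algebraMap ℝ A ε + h)⁻¹ʳ‖ ≤ ε⁻¹ := by
  have hinv : (algebraMap ℝ A ε)⁻¹ʳ = algebraMap ℝ A ε⁻¹ :=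
    left_inv_eq_right_inv
      (Ring.inverse_mul_cancel _ (isStrictlyPositive_algebraMap hε).isUnit)
      (by rw [← map_mul, mul_inv_cancel₀ hε.ne', map_one])
  rw [CStarAlgebra.norm_le_iff_le_algebraMap _ (by positivity)
    (isStrictlyPositive_algebraMap_add hε hh).ringInverse.nonneg, ← hinv]
  exact CStarAlgebra.ringInverse_le_ringInverse (le_add_of_nonneg_right hh)
    (isStrictlyPositive_algebraMap hε)

lemma norm_sub_mul_ringInverse_algebraMap_add_sq_le (hε : 0 < ε) (hwh : star w * w ≤ h) :
    ‖w - w * h * (algebraMap ℝ A ε + h)⁻¹ʳ‖ ^ 2 ≤ ε := by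
  have hh : 0 ≤ h := (star_mul_self_nonneg w).trans hwh
  have hk := isStrictlyPositive_algebraMap_add hε hh
  set k := algebraMap ℝ A ε + h with hk_def
  have hr : IsSelfAdjoint k⁻¹ʳ := hk.ringInverse.isSelfAdjoint
  have hsub : w - w * h * k⁻¹ʳ = ε • (w * k⁻¹ʳ) := by
    have hh_eq : h = k - algebraMap ℝ A ε := by rw [hk_def, add_sub_cancel_left]
    rw [hh_eq, mul_sub, sub_mul, Ring.mul_inverse_cancel_right _ _ hk.isUnit, sub_sub_cancel,
      ← Algebra.commutes, ← Algebra.smul_def, smul_mul_assoc]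
  have hle : star (w * k⁻¹ʳ) * (w * k⁻¹ʳ) ≤ k⁻¹ʳ :=
    calc star (w * k⁻¹ʳ) * (w * k⁻¹ʳ) = k⁻¹ʳ * (star w * w) * k⁻¹ʳ := by
          simp only [star_mul, hr.star_eq, mul_assoc]
      _ ≤ k⁻¹ʳ * k * k⁻¹ʳ := hr.conjugate_le_conjugate
          (hwh.trans (le_add_of_nonneg_left (isStrictlyPositive_algebraMap hε).nonneg))
      _ = k⁻¹ʳ := by rw [Ring.inverse_mul_cancel _ hk.isUnit, one_mul]
  calc ‖w - w * h * k⁻¹ʳ‖ ^ 2 = ε ^ 2 * ‖star (w * k⁻¹ʳ) * (w * k⁻¹ʳ)‖ := by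
        rw [hsub, norm_smul, mul_pow, CStarRing.norm_star_mul_self, Real.norm_of_nonneg hε.le,
          sq ‖_‖]
    _ ≤ ε ^ 2 * ε⁻¹ := by
        gcongr
        exact (CStarAlgebra.norm_le_norm_of_nonneg_of_le (star_mul_self_nonneg _) hle).trans
          (norm_ringInverse_algebraMap_add_le hε hh)
    _ = ε := by field_simp

lemma tendsto_mul_ringInverse_algebraMap_add (hwh : star w * w ≤ h) :
    Tendsto (fun ε : ℝ ↦ w * h * (algebraMap ℝ A ε + h)⁻¹ʳ) (𝓝[>] 0) (𝓝 w) := by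
  have hsqrt : Tendsto Real.sqrt (𝓝[>] 0) (𝓝 0) := by
    simpa using (Real.continuous_sqrt.tendsto 0).mono_left nhdsWithin_le_nhds
  refine tendsto_iff_norm_sub_tendsto_zero.mpr
    (squeeze_zero' (.of_forall fun _ ↦ norm_nonneg _) ?_ hsqrt)
  filter_upwards [self_mem_nhdsWithin] with ε hε
  rw [norm_sub_rev]
  exact Real.le_sqrt_of_sq_le (norm_sub_mul_ringInverse_algebraMap_add_sq_le hε hwh)

lemma nonneg_of_star_mul_self_le (hwh : star w * w ≤ h) (hcomm : Commute w h)
    (hpos : 0 ≤ w * h) : 0 ≤ w := by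
  have hh : 0 ≤ h := (star_mul_self_nonneg w).trans hwh
  refine CStarAlgebra.isClosed_nonneg.mem_of_tendsto
    (tendsto_mul_ringInverse_algebraMap_add hwh) ?_
  filter_upwards [self_mem_nhdsWithin] with ε hε
  have hk := isStrictlyPositive_algebraMap_add hε hh
  have hcomm' : Commute (w * h) (algebraMap ℝ A ε + h) :=
    (Algebra.commute_algebraMap_right ε _).add_right (hcomm.mul_left (.refl h))
  refine Commute.mul_nonneg hpos hk.ringInverse.nonneg ?_
  rw [Ring.inverse_of_isUnit hk.isUnit]
  exact Commute.units_inv_right (u := hk.isUnit.unit) hcomm'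

end Resolvent

section Idealizer

variable {R B : Type*} [CommSemiring R] [StarRing R] [Semiring B] [StarRing B] [Algebra R B]
  [StarModule R B]

/-- The idealizer of a non-unital star subalgebra `Z`: the largest star subalgebra in which `Z` is a
two-sided ideal. It turns ideal-type statements about a non-unital `Z` into membership in a unital
star subalgebra, to which spectral permanence applies. -/
def starIdealizer (Z : NonUnitalStarSubalgebra R B) : StarSubalgebra R B where
  carrier := {x | ∀ z ∈ Z, x * z ∈ Z ∧ z * x ∈ Z}
  mul_mem' {x y} hx hy z hz :=
    ⟨mul_assoc x y z ▸ (hx _ (hy z hz).1).1, mul_assoc z x y ▸ (hy _ (hx z hz).2).2⟩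
  add_mem' {x y} hx hy z hz :=
    ⟨add_mul x y z ▸ add_mem (hx z hz).1 (hy z hz).1,
      mul_add z x y ▸ add_mem (hx z hz).2 (hy z hz).2⟩
  algebraMap_mem' r z hz :=
    ⟨Algebra.smul_def r z ▸ SMulMemClass.smul_mem r hz,
      Algebra.commutes r z ▸ Algebra.smul_def r z ▸ SMulMemClass.smul_mem r hz⟩
  star_mem' {x} hx z hz := by
    have h := hx (star z) (star_mem hz)
    exact ⟨by simpa using star_mem h.2, by simpa using star_mem h.1⟩

variable {Z : NonUnitalStarSubalgebra R B}

lemma mem_starIdealizer {x : B} : x ∈ starIdealizer Z ↔ ∀ z ∈ Z, x * z ∈ Z ∧ z * x ∈ Z :=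
  Iff.rfl

lemma mem_starIdealizer_of_mem {x : B} (hx : x ∈ Z) : x ∈ starIdealizer Z :=
  fun _ hz ↦ ⟨mul_mem hx hz, mul_mem hz hx⟩

lemma isClosed_starIdealizer [TopologicalSpace B] [SeparatelyContinuousMul B]
    (hZ : IsClosed (Z : Set B)) : IsClosed (starIdealizer Z : Set B) := by
  have h : (starIdealizer Z : Set B) =
      ⋂ z ∈ Z, ((· * z) ⁻¹' (Z : Set B)) ∩ ((z * ·) ⁻¹' (Z : Set B)) := by
    ext x
    simp [mem_starIdealizer]
  rw [h]
  exact isClosed_biInter fun z _ ↦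
    (hZ.preimage (continuous_mul_const z)).inter (hZ.preimage (continuous_const_mul z))

end Idealizer

lemma ringInverse_mem_of_isClosed {B : Type*} [CStarAlgebra B] {M : StarSubalgebra ℂ B}
    (hM : IsClosed (M : Set B)) {x : B} (hx : x ∈ M) : x⁻¹ʳ ∈ M := by
  by_cases hu : IsUnit x
  · obtain ⟨y, hxy, -⟩ := isUnit_iff_exists.mp ((M.coe_isUnit (hS := hM) (a := ⟨x, hx⟩)).mp hu)
    have hxy' : x * y = 1 := congrArg Subtype.val hxy
    rw [left_inv_eq_right_inv (Ring.inverse_mul_cancel x hu) hxy']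
    exact y.2
  · rw [Ring.inverse_non_unit _ hu]
    exact zero_mem M

lemma mem_of_star_mul_self_le {Z : NonUnitalStarSubalgebra ℂ A} (hZ : IsClosed (Z : Set A))
    {w h : A} (hwh : star w * w ≤ h) (hh : h ∈ Z) (hmem : w * h ∈ Z) : w ∈ Z := by
  refine hZ.mem_of_tendsto (tendsto_mul_ringInverse_algebraMap_add hwh) (.of_forall fun ε ↦ ?_)
  have hε : algebraMap ℝ A ε ∈ starIdealizer Z := by
    rw [IsScalarTower.algebraMap_apply ℝ ℂ A]
    exact algebraMap_mem _ _
  have hk : (algebraMap ℝ A ε + h)⁻¹ʳ ∈ starIdealizer Z :=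
    ringInverse_mem_of_isClosed (isClosed_starIdealizer hZ)
      (add_mem hε (mem_starIdealizer_of_mem hh))
  exact (mem_starIdealizer.mp hk _ hmem).2

namespace StructuredCStar

variable (𝒜 : StructuredCStar A)

/-- `Z` as a non-unital star subalgebra of `A`. The axioms of `StructuredCStar` allow `Z = ∅`, which
is not a subalgebra. -/
def zSubalgebra (hZ : 𝒜.Z.Nonempty) : NonUnitalStarSubalgebra ℂ A where
  carrier := 𝒜.Z
  add_mem' ha hb := 𝒜.Z_add _ ha _ hb
  zero_mem' := by
    obtain ⟨z, hz⟩ := hZ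
    simpa using 𝒜.Z_smul 0 z hz
  mul_mem' ha hb := 𝒜.Z_mul _ ha _ hb
  smul_mem' c _ ha := 𝒜.Z_smul c _ ha
  star_mem' ha := 𝒜.Z_star _ ha

lemma Z_commute {w z : A} (hw : w ∈ 𝒜.Z) (hz : z ∈ 𝒜.Z) : Commute w z := by
  rw [commute_iff_eq, ← 𝒜.Z_fixed z hz]
  exact 𝒜.Z_central w hw z

lemma Φ_star (a : A) : 𝒜.Φ (star a) = star (𝒜.Φ a) :=
  map_star (PositiveLinearMap.mk 𝒜.Φ fun x y hxy ↦ by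
    simpa using 𝒜.Φ_pos (y - x) (sub_nonneg.mpr hxy)) a

lemma Φ_star_mul_self {s : A} (hs : s ∈ 𝒜.S) : 𝒜.Φ (star s * s) = star s * s := by
  obtain ⟨t, -, ht⟩ := 𝒜.S_sq_sub_PhiS s hs
  rw [← ht, 𝒜.Φ_idem]

lemma star_Φ_mul_Φ_le (a : A) : star (𝒜.Φ a) * 𝒜.Φ a ≤ 𝒜.Φ (star a * a) := by
  have h : 𝒜.Φ (star (a - 𝒜.Φ a) * (a - 𝒜.Φ a)) =
      𝒜.Φ (star a * a) - star (𝒜.Φ a) * 𝒜.Φ a := by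
    simp only [star_sub, sub_mul, mul_sub, map_sub, ← 𝒜.Φ_star, 𝒜.Φ_mul_left, 𝒜.Φ_mul_right,
      𝒜.Φ_idem]
    abel
  rw [← sub_nonneg, ← h]
  exact 𝒜.Φ_pos _ (star_mul_self_nonneg _)

lemma star_Φ_mul_mul_Φ_mul_le {a : A} (ha : a ∈ 𝒜.S) (b : A) :
    star (𝒜.Φ a * b) * (𝒜.Φ a * b) ≤ star (a * b) * (a * b) := by
  have h : star (𝒜.Φ a) * 𝒜.Φ a ≤ star a * a :=
    (𝒜.star_Φ_mul_Φ_le a).trans_eq (𝒜.Φ_star_mul_self ha)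
  simpa only [star_mul, mul_assoc] using star_left_conjugate_le_conjugate h b

lemma Φ_mul_mem_Z (hpos : 𝒜.Bistable {z ∈ 𝒜.Z | 0 ≤ z}) {a b : A} (ha : a ∈ 𝒜.S)
    (hb : b ∈ 𝒜.S) (hab : a * b ∈ 𝒜.Z) : 𝒜.Φ a * b ∈ 𝒜.Z := by
  have hstar : star (a * b) ∈ 𝒜.Z := 𝒜.Z_star _ hab
  have hmul : a * (b * star (a * b)) ∈ {z ∈ 𝒜.Z | 0 ≤ z} := by
    rw [← mul_assoc]
    exact ⟨𝒜.Z_mul _ hab _ hstar, mul_star_self_nonneg _⟩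
  have hw : 𝒜.Φ a * (b * star (a * b)) ∈ 𝒜.Z :=
    (hpos a ha _ (𝒜.S_mul b hb _ (𝒜.Z_sub_S hstar)) hmul).1.1
  have hwh : 𝒜.Φ a * b * (star (a * b) * (a * b)) ∈ 𝒜.Z := by
    simpa only [mul_assoc] using 𝒜.Z_mul _ hw _ hab
  exact mem_of_star_mul_self_le (Z := 𝒜.zSubalgebra ⟨_, hab⟩) 𝒜.Z_isClosed
    (𝒜.star_Φ_mul_mul_Φ_mul_le ha b) (𝒜.Z_mul _ hstar _ hab) hwh

lemma Φ_mul_mul_star_mul {a b : A} (hb : b ∈ 𝒜.S) (hw : 𝒜.Φ a * b * star (a * b) ∈ 𝒜.Z) :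
    𝒜.Φ a * b * star (a * b) = 𝒜.Φ a * b * star (𝒜.Φ a * b) := by
  have hbb : 𝒜.Φ (b * star b) = b * star b := by
    simpa only [star_star] using 𝒜.Φ_star_mul_self (𝒜.S_star b hb)
  calc 𝒜.Φ a * b * star (a * b) = 𝒜.Φ (𝒜.Φ a * b * star (a * b)) := (𝒜.Z_fixed _ hw).symm
    _ = 𝒜.Φ (𝒜.Φ a * (𝒜.Φ (b * star b) * star a)) := by rw [hbb, star_mul]; simp only [mul_assoc]
    _ = 𝒜.Φ a * (𝒜.Φ (b * star b) * 𝒜.Φ (star a)) := by rw [𝒜.Φ_mul_left, 𝒜.Φ_mul_left]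
    _ = 𝒜.Φ a * b * star (𝒜.Φ a * b) := by
      rw [hbb, 𝒜.Φ_star, star_mul]; simp only [mul_assoc]

lemma Φ_mul_nonneg {a b : A} (ha : a ∈ 𝒜.S) (hb : b ∈ 𝒜.S) (hab : a * b ∈ 𝒜.Z)
    (hab₀ : 0 ≤ a * b) (hw : 𝒜.Φ a * b ∈ 𝒜.Z) : 0 ≤ 𝒜.Φ a * b := by
  have hstar : star (a * b) ∈ 𝒜.Z := 𝒜.Z_star _ hab
  have hwh : 𝒜.Φ a * b * (star (a * b) * (a * b)) =
      𝒜.Φ a * b * (a * b) * star (𝒜.Φ a * b) := by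
    rw [← mul_assoc, 𝒜.Φ_mul_mul_star_mul hb (𝒜.Z_mul _ hw _ hstar), mul_assoc,
      (𝒜.Z_commute (𝒜.Z_star _ hw) hab).eq, ← mul_assoc]
  refine nonneg_of_star_mul_self_le (𝒜.star_Φ_mul_mul_Φ_mul_le ha b)
    (𝒜.Z_commute hw (𝒜.Z_mul _ hstar _ hab)) ?_
  rw [hwh]
  exact star_right_conjugate_nonneg hab₀ _

lemma bistable_of_left {B : Set A} (hB : ∀ x ∈ B, star x ∈ B)
    (hleft : ∀ a ∈ 𝒜.S, ∀ b ∈ 𝒜.S, a * b ∈ B → 𝒜.Φ a * b ∈ B) : 𝒜.Bistable B := by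
  refine fun a ha b hb hab ↦ ⟨hleft a ha b hb hab, ?_⟩
  have h := hleft (star b) (𝒜.S_star b hb) (star a) (𝒜.S_star a ha)
    (by simpa only [star_mul] using hB _ hab)
  simpa only [𝒜.Φ_star, star_mul, star_star] using hB _ h

theorem bistable_pos_iff_general :
    𝒜.Bistable {z ∈ 𝒜.Z | 0 ≤ z} ↔ 𝒜.Bistable 𝒜.Z := by
  refine ⟨fun hpos ↦ 𝒜.bistable_of_left 𝒜.Z_star fun a ha b hb ↦ 𝒜.Φ_mul_mem_Z hpos ha hb,
    fun hZ ↦ 𝒜.bistable_of_left (fun z hz ↦ ⟨𝒜.Z_star z hz.1, star_nonneg_iff.mpr hz.2⟩) ?_⟩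
  intro a ha b hb hab
  have hw : 𝒜.Φ a * b ∈ 𝒜.Z := (hZ a ha b hb hab.1).1
  exact ⟨hw, 𝒜.Φ_mul_nonneg ha hb hab.1 hab.2 hw⟩

end StructuredCStar

/-- if `Z₊` is bistable then `Z` is bistable; conversely, if
`Φ[S]` and `Z` are bistable then `Z₊` is bistable. -/
theorem StructuredCStar.bistable_pos_iff (𝒜 : StructuredCStar A) :
    (𝒜.Bistable {z ∈ 𝒜.Z | 0 ≤ z} → 𝒜.Bistable 𝒜.Z) ∧
    (𝒜.Bistable (𝒜.Φ '' 𝒜.S) → 𝒜.Bistable 𝒜.Z →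
      𝒜.Bistable {z ∈ 𝒜.Z | 0 ≤ z}) :=
  ⟨𝒜.bistable_pos_iff_general.mp, fun _ ↦ 𝒜.bistable_pos_iff_general.mpr⟩
end

section
/- Let (A,S,Z,Φ) be a structured C*-algebra in which Z is bistable. If a ∈ S and both a*a and aa* lie in Z, then Φ(a*)Φ(a) = Φ(a)Φ(a*). -/
variable {A : Type*} [CStarAlgebra A] [PartialOrder A] [StarOrderedRing A]

/-! Take `a, b ∈ S` with `ab, ba ∈ Z`, for instance `b = a*`. Bistability puts `p = Φ(a)Φ(b)` and
`q = Φ(b)Φ(a)` in `Z`, so that they commute with `Φ(a)` and `Φ(b)`. Then `p - q` annihilates `Φ(a)`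
and `Φ(b)`, hence also `p` and `q`, and so has square zero. Elements of `Z` are normal, and a normal
element of square zero vanishes. -/

theorem mul_sub_mul_mul_self_eq_zero_of_commute {R : Type*} [NonUnitalRing R] {a b : R}
    (ha : Commute (b * a) a) (hb : Commute (a * b) b) :
    (a * b - b * a) * (a * b - b * a) = 0 := by
  have annihilates_a : (a * b - b * a) * a = 0 := by
    rw [sub_mul, ha.eq, mul_assoc, sub_self]
  have annihilates_b : (a * b - b * a) * b = 0 := by
    rw [sub_mul, hb.eq, mul_assoc, sub_self]
  rw [mul_sub, ← mul_assoc, ← mul_assoc, annihilates_a, annihilates_b, zero_mul, zero_mul, sub_self]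

section CStarRing

variable {E : Type*} [NonUnitalNormedRing E] [StarRing E] [CStarRing E]

theorem eq_zero_of_isStarNormal_of_mul_self_eq_zero {x : E} (hx : IsStarNormal x)
    (hsq : x * x = 0) : x = 0 := by
  have star_mul_self_sq : star (star x * x) * (star x * x) = 0 :=
    calc star (star x * x) * (star x * x)
      _ = star x * (x * star x) * x := by simp only [star_mul, star_star, mul_assoc]
      _ = star x * star x * (x * x) := by simp only [← star_comm_self' x, mul_assoc]
      _ = 0 := by rw [hsq, mul_zero]
  rwa [CStarRing.star_mul_self_eq_zero_iff, CStarRing.star_mul_self_eq_zero_iff]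
    at star_mul_self_sq

theorem commute_of_isStarNormal_mul_sub_mul {a b : E} (ha : Commute (b * a) a)
    (hb : Commute (a * b) b) (hnormal : IsStarNormal (a * b - b * a)) : Commute a b :=
  sub_eq_zero.mp <| eq_zero_of_isStarNormal_of_mul_self_eq_zero hnormal <|
    mul_sub_mul_mul_self_eq_zero_of_commute ha hb

end CStarRing

namespace StructuredCStar

variable {𝒜 : StructuredCStar A}

theorem sub_mem_Z {y z : A} (hy : y ∈ 𝒜.Z) (hz : z ∈ 𝒜.Z) : y - z ∈ 𝒜.Z := by
  simpa only [neg_one_smul, ← sub_eq_add_neg] using 𝒜.Z_add y hy _ (𝒜.Z_smul (-1) z hz)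

theorem isStarNormal_of_mem_Z {z : A} (hz : z ∈ 𝒜.Z) : IsStarNormal z where
  star_comm_self := by
    simpa only [𝒜.Z_fixed z hz, commute_iff_eq] using 𝒜.Z_central _ (𝒜.Z_star z hz) z

theorem Bistable.phi_mul_phi_mem {B : Set A} (hB : 𝒜.Bistable B) {a b : A} (ha : a ∈ 𝒜.S)
    (hb : b ∈ 𝒜.S) (hab : a * b ∈ B) : 𝒜.Φ a * 𝒜.Φ b ∈ B :=
  (hB _ (𝒜.PhiS_sub_S a ha) b hb (hB a ha b hb hab).1).2

theorem phi_star_comm_general (hZ : 𝒜.Bistable 𝒜.Z) {a b : A} (ha : a ∈ 𝒜.S) (hb : b ∈ 𝒜.S)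
    (hab : a * b ∈ 𝒜.Z) (hba : b * a ∈ 𝒜.Z) : Commute (𝒜.Φ a) (𝒜.Φ b) := by
  have hp : 𝒜.Φ a * 𝒜.Φ b ∈ 𝒜.Z := hZ.phi_mul_phi_mem ha hb hab
  have hq : 𝒜.Φ b * 𝒜.Φ a ∈ 𝒜.Z := hZ.phi_mul_phi_mem hb ha hba
  exact commute_of_isStarNormal_mul_sub_mul (𝒜.Z_central _ hq a) (𝒜.Z_central _ hp b)
    (isStarNormal_of_mem_Z (sub_mem_Z hp hq))

end StructuredCStar

/-- if `Z` is bistable, `a ∈ S` and `a*a, aa* ∈ Z`, then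
`Φ(a*)Φ(a) = Φ(a)Φ(a*)`. -/
theorem StructuredCStar.phi_star_comm (𝒜 : StructuredCStar A)
    (hZ : 𝒜.Bistable 𝒜.Z) {a : A} (ha : a ∈ 𝒜.S)
    (h1 : star a * a ∈ 𝒜.Z) (h2 : a * star a ∈ 𝒜.Z) :
    𝒜.Φ (star a) * 𝒜.Φ a = 𝒜.Φ a * 𝒜.Φ (star a) :=
  (phi_star_comm_general hZ (𝒜.S_star a ha) ha h1 h2).eq
end

section
/- Let (A,S,Z,Φ) be a structured C*-algebra. Every norm-closed productive subset P ⊆ S that is closed under multiplication (PP ⊆ P) is bistable. -/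
variable {A : Type*} [CStarAlgebra A] [PartialOrder A] [StarOrderedRing A]

/-! If `a * b ∈ P`, right multiplication by `b` maps `P a` into `P (a b) ⊆ P`. It is continuous and
`P` is closed, so it maps the closure of `P a`, which contains `Φ a`, into `P` as well. The argument
for `a * Φ b` is symmetric. -/

section SeparatelyContinuousMul

variable {M : Type*} [Semigroup M] [TopologicalSpace M] [SeparatelyContinuousMul M]
  {P Q : Set M} {a b x : M}

theorem mul_mem_of_mem_closure_image_mul_right (hQ : IsClosed Q)
    (hPQ : Set.MapsTo (· * (a * b)) P Q) (hx : x ∈ closure ((· * a) '' P)) : x * b ∈ Q := by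
  have maps_image : Set.MapsTo (· * b) ((· * a) '' P) Q := by
    rintro _ ⟨p, hp, rfl⟩
    simpa only [mul_assoc] using hPQ hp
  exact maps_image.closure_left (continuous_mul_const b) hQ hx

theorem mul_mem_of_mem_closure_image_mul_left (hQ : IsClosed Q)
    (hPQ : Set.MapsTo (a * b * ·) P Q) (hx : x ∈ closure ((b * ·) '' P)) : a * x ∈ Q := by
  have maps_image : Set.MapsTo (a * ·) ((b * ·) '' P) Q := by
    rintro _ ⟨p, hp, rfl⟩
    simpa only [mul_assoc] using hPQ hp
  exact maps_image.closure_left (continuous_const_mul a) hQ hx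

end SeparatelyContinuousMul

theorem StructuredCStar.bistable_of_productive_general (𝒜 : StructuredCStar A) {P : Set A}
    (hPclosed : IsClosed P) (hPmul : ∀ p ∈ P, ∀ q ∈ P, p * q ∈ P)
    (hP : 𝒜.Productive P) : 𝒜.Bistable P := by
  intro a ha b hb hab
  constructor
  · exact mul_mem_of_mem_closure_image_mul_right hPclosed
      (fun p hp ↦ hPmul p hp (a * b) hab) (hP a ha).2
  · exact mul_mem_of_mem_closure_image_mul_left hPclosed
      (fun p hp ↦ hPmul (a * b) hab p hp) (hP b hb).1

/-- every norm-closed productive subsemigroup of `S` is bistable. -/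
theorem StructuredCStar.bistable_of_productive (𝒜 : StructuredCStar A) {P : Set A}
    (hPS : P ⊆ 𝒜.S) (hPclosed : IsClosed P)
    (hPmul : ∀ p ∈ P, ∀ q ∈ P, p * q ∈ P)
    (hP : 𝒜.Productive P) : 𝒜.Bistable P :=
  𝒜.bistable_of_productive_general hPclosed hPmul hP
end
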